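/- Let f be a monotone, normalized, submodular function on a finite ground set V with f({j}) > 0 for every j ∈ V, with total curvature κ_f satisfying 0 < κ_f < 1, and let f^κ be its curve-normalized version. Let X ⊆ V be nonempty, let α ≥ 1 be a real number, and suppose a function f̂^κ satisfies f̂^κ(X) ≤ f^κ(X) ≤ α · f̂^κ(X). Then the function value f̂(X) := κ_f · f̂^κ(X) + (1 − κ_f) · Σ_{j∈X} f({j}) satisfies f̂(X) ≤ f(X) ≤ (α / (1 + (α − 1)(1 − κ_f))) · f̂(X) ≤ f̂(X) / (1 − κ_f). -/

import Mathlib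

/-!
Write `S = ∑ j ∈ X, f {j}`, `c = 1 - κ` and `F = κ f̂^κ(X) + c S`. Clearing `κ` from the hypotheses
gives `κ f̂^κ(X) ≤ f X - c S ≤ α κ f̂^κ(X)`; the left half is the first inequality. Subadditivity
(`le_sum_singleton`) gives `f X ≤ S`, and adding `(α - 1) c` times this to the right half gives
`(1 + (α - 1) c) f X ≤ α F`, the second inequality. Since `f X ≥ 0`, it forces `F ≥ 0`, and the
third inequality is then `α / (1 + (α - 1) c) ≤ 1 / c`, i.e. `c ≤ 1`.
-/

open Finset


/-- A normalized nonnegative submodular function is subadditive over singletons. -/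
theorem le_sum_singleton {V : Type*} [DecidableEq V] (f : Finset V → ℝ)
    (hsub : ∀ S T : Finset V, f S + f T ≥ f (S ∪ T) + f (S ∩ T))
    (hnonneg : ∀ S : Finset V, 0 ≤ f S) (hnorm : f ∅ = 0) (X : Finset V) :
    f X ≤ ∑ j ∈ X, f {j} := by
  induction X using Finset.induction_on with
  | empty => simp [hnorm]
  | insert a s ha ih =>
    rw [Finset.sum_insert ha, Finset.insert_eq]
    linarith [hsub {a} s, hnonneg ({a} ∩ s)]

/-- Theorem 1: if `f̂^κ(X) ≤ f^κ(X) ≤ α f̂^κ(X)`, then the function value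
`f̂(X) = κ f̂^κ(X) + (1-κ) ∑_{j∈X} f {j}` satisfies
`f̂(X) ≤ f(X) ≤ (α / (1 + (α-1)(1-κ))) f̂(X) ≤ f̂(X) / (1-κ)`. -/
theorem curvature_approx_transfer
    {V : Type*} [Fintype V] [DecidableEq V] [Nonempty V]
    (f : Finset V → ℝ)
    (hsub : ∀ S T : Finset V, f S + f T ≥ f (S ∪ T) + f (S ∩ T))
    (hmono : ∀ S T : Finset V, S ⊆ T → f S ≤ f T)
    (hnorm : f ∅ = 0)
    (hpos : ∀ j : V, 0 < f {j})
    (κ : ℝ)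
    (hκ : κ = 1 - univ.inf' univ_nonempty
      (fun j : V => (f univ - f (univ \ {j})) / f {j}))
    (hκ0 : 0 < κ) (hκ1 : κ < 1)
    (fκ : Finset V → ℝ)
    (hfκ : ∀ X : Finset V, fκ X = (f X - (1 - κ) * ∑ j ∈ X, f {j}) / κ)
    (X : Finset V) (hX : X.Nonempty)
    (α : ℝ) (hα : 1 ≤ α)
    (fhatκ : Finset V → ℝ)
    (hlow : fhatκ X ≤ fκ X) (hup : fκ X ≤ α * fhatκ X) :
    κ * fhatκ X + (1 - κ) * (∑ j ∈ X, f {j}) ≤ f X ∧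
    f X ≤ (α / (1 + (α - 1) * (1 - κ))) *
      (κ * fhatκ X + (1 - κ) * (∑ j ∈ X, f {j})) ∧
    (α / (1 + (α - 1) * (1 - κ))) *
      (κ * fhatκ X + (1 - κ) * (∑ j ∈ X, f {j})) ≤
      (κ * fhatκ X + (1 - κ) * (∑ j ∈ X, f {j})) / (1 - κ) := by
  have hnonneg : ∀ S : Finset V, 0 ≤ f S := fun S => hnorm ▸ hmono ∅ S (Finset.empty_subset S)
  have hS := le_sum_singleton f hsub hnonneg hnorm X
  have hf := hnonneg X
  rw [hfκ] at hlow hup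
  rw [le_div_iff₀ hκ0] at hlow
  rw [div_le_iff₀ hκ0] at hup
  generalize (∑ j ∈ X, f {j}) = S at *
  have hc : 0 < 1 - κ := by linarith
  have hαc : 0 ≤ (α - 1) * (1 - κ) := mul_nonneg (by linarith) hc.le
  have hd : 0 < 1 + (α - 1) * (1 - κ) := by linarith
  have hmid : f X ≤ (α / (1 + (α - 1) * (1 - κ))) * (κ * fhatκ X + (1 - κ) * S) := by
    rw [div_mul_eq_mul_div, le_div_iff₀ hd]
    nlinarith [mul_le_mul_of_nonneg_left hS hαc]
  have hF : 0 ≤ κ * fhatκ X + (1 - κ) * S :=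
    nonneg_of_mul_nonneg_right (hf.trans hmid) (div_pos (by linarith) hd)
  refine ⟨by linarith, hmid, ?_⟩
  rw [div_eq_mul_one_div (κ * fhatκ X + (1 - κ) * S), mul_comm]
  refine mul_le_mul_of_nonneg_left ?_ hF
  rw [div_le_div_iff₀ hd hc]
  linarith
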